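/- Let p be a prime and G a non-abelian p-group of order p^n such that G/G' is elementary abelian of order p^{n-1} and Z(G) has exponent p. Then |M(G)| = p^{(n-1)(n-2)/2 - 1} if and only if G is isomorphic to one of: Q_8 × (ℤ_2)^{n-3} (with p = 2), E_2 × (ℤ_p)^{n-3} (with p odd), or H × (ℤ_p)^{n-2m-1} where H is an extraspecial p-group of order p^{2m+1} with m ≥ 2. -/

import Mathlib

/-- The kernel of the canonical free presentation `FreeGroup G → G`. -/
def presentationKernel (G : Type u) [Group G] : Subgroup (FreeGroup G) :=
  (FreeGroup.lift (id : G → G)).ker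

/-- The Schur multiplier `M(G) = H₂(G, ℤ)` (second integral group homology) of a
group `G`, realised via Hopf's integral formula `H₂(G, ℤ) ≅ (R ⊓ [F, F]) / [F, R]`,
where `F = FreeGroup G` is the canonical free group surjecting onto `G` with
kernel `R`. -/
def SchurMultiplier (G : Type u) [Group G] : Type u :=
  ↥(presentationKernel G ⊓ commutator (FreeGroup G)) ⧸
    (⁅(⊤ : Subgroup (FreeGroup G)), presentationKernel G⁆.subgroupOf
      (presentationKernel G ⊓ commutator (FreeGroup G)))

/-- A finite `p`-group `H` is extraspecial if its center, derived subgroup and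
Frattini subgroup coincide and have order `p`. -/
def IsExtraspecial (p : ℕ) (H : Type*) [Group H] : Prop :=
  Subgroup.center H = commutator H ∧ Subgroup.center H = frattini H ∧
    Nat.card (Subgroup.center H) = p

/-- `H` is (isomorphic to) `E₂`, the extraspecial group of order `p^3` and
exponent `p^2`. -/
def IsE₂ (p : ℕ) (H : Type*) [Group H] : Prop :=
  IsExtraspecial p H ∧ Nat.card H = p ^ 3 ∧ Monoid.exponent H = p ^ 2

/-!
Let `G = F / R` be the canonical free presentation and `K = F / [F, R]`. Every central extension
of a quotient of `G` is, modulo its center, an image of the central extension `K → G`. By Hopf's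
formula `|M(G)| |G'| = |K'|`. If `T` denotes the preimage of `G'` in `K`, then `K' / [K, T]` is
elementary abelian of rank `(n - 1).choose 2`, so `s(G) = 2` holds if and only if `[K, T] = 1`, that
is, if and only if `K' ≤ Z(K)`.

An element of `K` centralizes `K'` as soon as its image `w` in `G` satisfies `w ^ p ≠ 1` or commutes
with two non-commuting elements. In the listed groups such elements generate. Conversely,
`G ≃ H × (ℤ/p)^k` with `H` extraspecial, and `K' ≤ Z(K)` forces every central extension of `H` to
have class at most two. This excludes the dihedral group of order `8`, which is a central quotient
of the generalized quaternion group of order `16`, and the group of order `p ^ 3` and odd exponent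
`p`, which is a central quotient of a group of order `p ^ 4` and class three.
-/

open Subgroup
open scoped commutatorElement

section CentralElements

variable {E K : Type*} [Group E] [Group K]

theorem commutatorElement_mul_left_of_mem_center {x y z : E} (hz : z ∈ center E) :
    ⁅x * z, y⁆ = ⁅x, y⁆ := by
  rw [commutatorElement_mul_left_eq_conj_mul,
    commutatorElement_eq_one_iff_mul_comm.2 (mem_center_iff.1 hz y).symm, mul_one, mul_inv_cancel,
    one_mul]

theorem commutatorElement_mul_right_of_mem_center {x y z : E} (hz : z ∈ center E) :
    ⁅x, y * z⁆ = ⁅x, y⁆ := by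
  rw [← commutatorElement_inv, commutatorElement_mul_left_of_mem_center hz, commutatorElement_inv]

theorem map_commutator_of_range_sup_center {f : K →* E} (hf : f.range ⊔ center E = ⊤) :
    (commutator K).map f = commutator E := by
  refine le_antisymm ?_ (commutator_le.2 fun x _ y _ ↦ ?_)
  · rw [commutator_def, commutator_def, map_commutator]
    exact commutator_mono le_top le_top
  · obtain ⟨_, ⟨k, rfl⟩, z, hz, rfl⟩ := mem_sup_of_normal_right.1 (hf ▸ mem_top x)
    obtain ⟨_, ⟨l, rfl⟩, w, hw, rfl⟩ := mem_sup_of_normal_right.1 (hf ▸ mem_top y)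
    rw [commutatorElement_mul_left_of_mem_center hz, commutatorElement_mul_right_of_mem_center hw,
      ← map_commutatorElement]
    exact mem_map_of_mem f (commutator_mem_commutator (mem_top k) (mem_top l))

theorem map_commutator_of_surjective {f : K →* E} (hf : Function.Surjective f) :
    (commutator K).map f = commutator E :=
  map_commutator_of_range_sup_center (by rw [MonoidHom.range_eq_top.2 hf, top_sup_eq])

theorem map_mem_center_of_range_sup_center {f : K →* E} (hf : f.range ⊔ center E = ⊤) {x : K}
    (hx : x ∈ center K) : f x ∈ center E := by
  rw [mem_center_iff]
  intro y
  obtain ⟨_, ⟨k, rfl⟩, z, hz, rfl⟩ := mem_sup_of_normal_right.1 (hf ▸ mem_top y)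
  rw [mul_assoc, ← mem_center_iff.1 hz, ← mul_assoc, ← map_mul, mem_center_iff.1 hx, map_mul,
    mul_assoc]

theorem ker_quotientLift_le_center (f : K →* E) :
    (QuotientGroup.lift ⁅(⊤ : Subgroup K), f.ker⁆ f (commutator_le_right _ _)).ker ≤ center _ := by
  intro x hx
  obtain ⟨r, rfl⟩ := QuotientGroup.mk_surjective x
  refine mem_center_iff.2 fun y ↦ ?_
  obtain ⟨s, rfl⟩ := QuotientGroup.mk_surjective y
  refine commutatorElement_eq_one_iff_mul_comm.1 ?_
  exact (QuotientGroup.eq_one_iff ⁅s, r⁆).2 (commutator_mem_commutator (mem_top s) hx)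

end CentralElements

/-- The quotient `F / [F, R]` of the canonical free presentation `F / R` of `G`. It is a central
extension of `G` mapping to every other one. -/
def FreeCentralExtension (G : Type*) [Group G] : Type _ :=
  FreeGroup G ⧸ ⁅(⊤ : Subgroup (FreeGroup G)), presentationKernel G⁆

namespace FreeCentralExtension

variable {G : Type*} [Group G]

instance : (presentationKernel G).Normal :=
  MonoidHom.normal_ker _

instance : Group (FreeCentralExtension G) :=
  inferInstanceAs (Group (FreeGroup G ⧸ ⁅(⊤ : Subgroup (FreeGroup G)), presentationKernel G⁆))

variable (G) in
/-- The projection of `F / [F, R]` onto `F / R = G`. -/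
def proj : FreeCentralExtension G →* G :=
  QuotientGroup.lift _ (FreeGroup.lift id) (commutator_le_right _ _)

theorem proj_surjective : Function.Surjective (proj G) := fun g ↦
  ⟨QuotientGroup.mk (FreeGroup.of g), FreeGroup.lift_apply_of⟩

theorem ker_proj_le_center : (proj G).ker ≤ center (FreeCentralExtension G) :=
  ker_quotientLift_le_center (FreeGroup.lift id)

variable {E H : Type*} [Group E] [Group H]

theorem exists_lift (φ : G →* H) {ε : E →* H} (hε : Function.Surjective ε)
    (hker : ε.ker ≤ center E) : ∃ ψ : FreeCentralExtension G →* E, ε.comp ψ = φ.comp (proj G) := by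
  choose s hs using hε
  let ψ : FreeGroup G →* E := FreeGroup.lift fun g ↦ s (φ g)
  have hψ : ε.comp ψ = φ.comp (FreeGroup.lift id) := by
    ext g
    simp [ψ, hs]
  have hψN : ⁅(⊤ : Subgroup (FreeGroup G)), presentationKernel G⁆ ≤ ψ.ker := by
    refine commutator_le.2 fun x _ r hr ↦ ?_
    rw [MonoidHom.mem_ker, map_commutatorElement, commutatorElement_eq_one_iff_mul_comm]
    refine mem_center_iff.1 (hker ?_) _
    rw [MonoidHom.mem_ker, ← MonoidHom.comp_apply, hψ, MonoidHom.comp_apply,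
      MonoidHom.mem_ker.1 hr, map_one]
  exact ⟨QuotientGroup.lift _ ψ hψN, QuotientGroup.monoidHom_ext _ hψ⟩

theorem exists_lift_of_surjective {φ : G →* H} (hφ : Function.Surjective φ) {ε : E →* H}
    (hε : Function.Surjective ε) (hker : ε.ker ≤ center E) :
    ∃ ψ : FreeCentralExtension G →* E, ε.comp ψ = φ.comp (proj G) ∧ ψ.range ⊔ center E = ⊤ := by
  obtain ⟨ψ, hψ⟩ := exists_lift φ hε hker
  refine ⟨ψ, hψ, eq_top_iff.2 fun x _ ↦ ?_⟩
  obtain ⟨k, hk⟩ := (hφ.comp proj_surjective) (ε x)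
  have hkx : ε (ψ k) = ε x := (DFunLike.congr_fun hψ k).trans hk
  refine mem_sup_of_normal_right.2 ⟨ψ k, ⟨k, rfl⟩, (ψ k)⁻¹ * x, hker ?_, mul_inv_cancel_left _ _⟩
  rw [MonoidHom.mem_ker, map_mul, map_inv, hkx, inv_mul_cancel]

theorem commutator_le_center_of_surjective
    (hG : commutator (FreeCentralExtension G) ≤ center (FreeCentralExtension G))
    {φ : G →* H} (hφ : Function.Surjective φ) {ε : E →* H}
    (hε : Function.Surjective ε) (hker : ε.ker ≤ center E) : commutator E ≤ center E := by
  obtain ⟨ψ, -, hψ⟩ := exists_lift_of_surjective hφ hε hker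
  rw [← map_commutator_of_range_sup_center hψ]
  rintro _ ⟨x, hx, rfl⟩
  exact map_mem_center_of_range_sup_center hψ (hG hx)

theorem map_proj_commutator : (commutator (FreeCentralExtension G)).map (proj G) = commutator G :=
  map_commutator_of_surjective proj_surjective

theorem card_schurMultiplier_mul_card_commutator :
    Nat.card (SchurMultiplier G) * Nat.card (commutator G) =
      Nat.card (commutator (FreeCentralExtension G)) := by
  set N := ⁅(⊤ : Subgroup (FreeGroup G)), presentationKernel G⁆
  set F' := commutator (FreeGroup G)
  have hN : N ≤ presentationKernel G ⊓ F' :=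
    le_inf (commutator_le_right _ _) (commutator_mono le_rfl le_top)
  have hlift : Function.Surjective (FreeGroup.lift (id : G → G)) := fun g ↦
    ⟨FreeGroup.of g, FreeGroup.lift_apply_of⟩
  have hG : (presentationKernel G ⊓ F').relIndex F' = Nat.card (commutator G) := by
    rw [inf_relIndex_right, presentationKernel, relIndex_ker,
      map_commutator_of_surjective hlift]
  have hK : N.relIndex F' = Nat.card (commutator (FreeCentralExtension G)) := by
    conv_lhs => rw [← QuotientGroup.ker_mk' N]
    rw [relIndex_ker, map_commutator_of_surjective (QuotientGroup.mk'_surjective N)]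
    rfl
  rw [← hG, ← hK]
  exact relIndex_mul_relIndex _ _ _ hN inf_le_right

end FreeCentralExtension

section ClassTwo

variable {G : Type*} [Group G]

/-- In a group of nilpotency class at most two, `g ↦ ⁅g, w⁆` is a homomorphism. -/
def commutatorHom (hG : commutator G ≤ center G) (w : G) : G →* commutator G where
  toFun g := ⟨⁅g, w⁆, commutator_mem_commutator (mem_top g) (mem_top w)⟩
  map_one' := Subtype.ext (commutatorElement_one_left w)
  map_mul' g h := Subtype.ext <| by
    have hcen := mem_center_iff.1 (hG (commutator_mem_commutator (mem_top h) (mem_top w))) g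
    change ⁅g * h, w⁆ = ⁅g, w⁆ * ⁅h, w⁆
    rw [commutatorElement_mul_left_eq_conj_mul, hcen, mul_inv_cancel_right,
      mem_center_iff.1 (hG (commutator_mem_commutator (mem_top h) (mem_top w)))]

theorem mem_ker_commutatorHom {hG : commutator G ≤ center G} {g w : G} :
    g ∈ (commutatorHom hG w).ker ↔ Commute g w := by
  rw [MonoidHom.mem_ker, ← commutatorElement_eq_one_iff_commute, Subtype.ext_iff]
  rfl

theorem commutatorElement_pow_left (hG : commutator G ≤ center G) (x y : G) (n : ℕ) :
    ⁅x ^ n, y⁆ = ⁅x, y⁆ ^ n :=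
  congrArg Subtype.val (map_pow (commutatorHom hG y) x n)

theorem commutatorElement_zpow_left (hG : commutator G ≤ center G) (x y : G) (k : ℤ) :
    ⁅x ^ k, y⁆ = ⁅x, y⁆ ^ k :=
  congrArg Subtype.val (map_zpow (commutatorHom hG y) x k)

theorem mul_pow_of_commutator_le_center (hG : commutator G ≤ center G) (x y : G) (n : ℕ) :
    (x * y) ^ n = x ^ n * y ^ n * ⁅y, x⁆ ^ n.choose 2 := by
  have hcen (i : ℕ) (g : G) : Commute g (⁅y, x⁆ ^ i) :=
    mem_center_iff.1 (pow_mem (hG (commutator_mem_commutator (mem_top y) (mem_top x))) i) g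
  induction n with
  | zero => simp
  | succ n ih =>
    have hswap : y ^ n * x = x * y ^ n * ⁅y, x⁆ ^ n := by
      rw [(hcen n _).eq, ← commutatorElement_pow_left hG, commutatorElement_def]
      group
    calc
      (x * y) ^ (n + 1) = x ^ n * (y ^ n * x) * y * ⁅y, x⁆ ^ n.choose 2 := by
        rw [pow_succ, ih, mul_assoc, ← (hcen _ _).eq]
        simp only [mul_assoc]
      _ = x ^ n * (x * y ^ n) * y * (⁅y, x⁆ ^ n * ⁅y, x⁆ ^ n.choose 2) := by
        rw [hswap, ← mul_assoc _ _ (⁅y, x⁆ ^ n), mul_assoc _ (⁅y, x⁆ ^ n) y, ← (hcen n y).eq]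
        simp only [mul_assoc]
      _ = _ := by
        rw [Nat.choose_succ_succ' n 1, Nat.choose_one_right, pow_add ⁅y, x⁆, pow_succ x, pow_succ y]
        simp only [mul_assoc]

end ClassTwo

section CommutatorOfGenerators

variable {G : Type*} [Group G]

open scoped IsMulCommutative in
theorem card_closure_dvd_pow_card {s : Set G} [Finite s] {n : ℕ}
    (hcomm : ∀ x ∈ s, ∀ y ∈ s, x * y = y * x) (hpow : ∀ x ∈ s, x ^ n = 1) :
    Nat.card (closure s) ∣ n ^ Nat.card s := by
  have := isMulCommutative_closure hcomm
  have hker : (powMonoidHom n : closure s →* closure s).ker = ⊤ := by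
    rw [← top_le_iff, ← closure_closure_coe_preimage, closure_le]
    exact fun x hx ↦ Subtype.ext (hpow x hx)
  have hexp (x : closure s) : x ^ n = 1 := MonoidHom.mem_ker.1 (hker ▸ mem_top x)
  exact (card_dvd_exponent_pow_rank' _ hexp).trans
    (pow_dvd_pow n (rank_closure_finite_le_nat_card s))

theorem commutator_le_of_closure_sup_center {s : Set G} (hs : closure s ⊔ center G = ⊤)
    {P : Subgroup G} [P.Normal] (h : ∀ x ∈ s, ∀ y ∈ s, ⁅x, y⁆ ∈ P) : commutator G ≤ P := by
  have hgen : closure (s ∪ center G) = ⊤ := by rw [Subgroup.closure_union, closure_eq, hs]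
  have hmem : ∀ x ∈ s ∪ center G, ∀ y ∈ s ∪ center G, ⁅x, y⁆ ∈ P := by
    rintro x (hx | hx) y (hy | hy)
    · exact h x hx y hy
    · rw [commutatorElement_eq_one_iff_mul_comm.2 (mem_center_iff.1 hy x)]
      exact P.one_mem
    all_goals
      rw [commutatorElement_eq_one_iff_mul_comm.2 (mem_center_iff.1 hx y).symm]
      exact P.one_mem
  have hcomm : IsMulCommutative (closure (QuotientGroup.mk' P '' (s ∪ center G))) := by
    refine isMulCommutative_closure ?_
    rintro _ ⟨x, hx, rfl⟩ _ ⟨y, hy, rfl⟩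
    rw [← commutatorElement_eq_one_iff_mul_comm, ← map_commutatorElement]
    exact (QuotientGroup.eq_one_iff _).2 (hmem x hx y hy)
  rw [← MonoidHom.map_closure, hgen,
    map_top_of_surjective _ (QuotientGroup.mk'_surjective P)] at hcomm
  refine Normal.quotient_commutative_iff_commutator_le.1 ⟨⟨fun x y ↦ ?_⟩⟩
  exact congrArg Subtype.val (hcomm.is_comm.comm (⟨x, mem_top x⟩ : (⊤ : Subgroup (G ⧸ P)))
    ⟨y, mem_top y⟩)

theorem normal_of_le_center {P : Subgroup G} (hP : P ≤ center G) : P.Normal :=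
  ⟨fun z hz g ↦ by rwa [mem_center_iff.1 (hP hz) g, mul_inv_cancel_right]⟩

theorem commutator_le_closure_of_lt {ι : Type*} [LinearOrder ι] {e : ι → G}
    (he : closure (Set.range e) ⊔ center G = ⊤) (hcen : commutator G ≤ center G) :
    commutator G ≤ closure (Set.range fun x : {x : ι × ι // x.1 < x.2} ↦ ⁅e x.1.1, e x.1.2⁆) := by
  set P := closure (Set.range fun x : {x : ι × ι // x.1 < x.2} ↦ ⁅e x.1.1, e x.1.2⁆)
  have hP : P ≤ center G := by
    rw [closure_le]
    rintro _ ⟨x, rfl⟩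
    exact hcen (commutator_mem_commutator (mem_top _) (mem_top _))
  have hlt {i j : ι} (hij : i < j) : ⁅e i, e j⁆ ∈ P := subset_closure ⟨⟨(i, j), hij⟩, rfl⟩
  have := normal_of_le_center hP
  refine commutator_le_of_closure_sup_center he ?_
  rintro _ ⟨i, rfl⟩ _ ⟨j, rfl⟩
  rcases lt_trichotomy i j with hij | rfl | hij
  · exact hlt hij
  · rw [commutatorElement_self]
    exact P.one_mem
  · rw [← commutatorElement_inv]
    exact P.inv_mem (hlt hij)

end CommutatorOfGenerators

section ElementaryAbelian

variable {ι : Type*}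

theorem card_lt_pairs [Fintype ι] [LinearOrder ι] :
    Nat.card {x : ι × ι // x.1 < x.2} = (Fintype.card ι).choose 2 := by
  rw [Nat.card_eq_fintype_card, Fintype.card_subtype, ← Finset.univ_product_univ,
    Finset.card_product_filter_lt, Finset.card_univ]

theorem closure_range_ofAdd_single [Finite ι] [DecidableEq ι] (n : ℕ) :
    Subgroup.closure (Set.range fun i ↦ Multiplicative.ofAdd (Pi.single i 1 : ι → ZMod n)) = ⊤ := by
  cases nonempty_fintype ι
  rw [← top_le_iff]
  rintro v -
  have hv : v =
      ∏ i, Multiplicative.ofAdd (Pi.single i 1 : ι → ZMod n) ^ ((v.toAdd i).cast : ℤ) := by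
    refine Multiplicative.toAdd.injective ((pi_eq_sum_univ' v.toAdd).trans ?_)
    rw [toAdd_prod]
    refine Finset.sum_congr rfl fun i _ ↦ ?_
    simp [← Pi.single_smul']
  rw [hv]
  exact prod_mem fun i _ ↦ zpow_mem (Subgroup.subset_closure (Set.mem_range_self i)) _

theorem card_commutator_dvd_of_central [Fintype ι] [LinearOrder ι] {n : ℕ} {L : Type*}
    [Group L] {g : L →* Multiplicative (ι → ZMod n)} (hg : Function.Surjective g)
    (hker : g.ker ≤ center L) : Nat.card (commutator L) ∣ n ^ (Fintype.card ι).choose 2 := by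
  have hcen : commutator L ≤ center L := (Abelianization.commutator_subset_ker g).trans hker
  have hpow (x : L) : x ^ n ∈ center L := by
    refine hker (MonoidHom.mem_ker.2 (Multiplicative.toAdd.injective (funext fun i ↦ ?_)))
    simp
  choose e he using fun i : ι ↦ hg (Multiplicative.ofAdd (Pi.single i 1))
  have hgen : closure (Set.range e) ⊔ center L = ⊤ := by
    have hmap : (closure (Set.range e)).map g = ⊤ := by
      rw [MonoidHom.map_closure, ← Set.range_comp, ← closure_range_ofAdd_single (ι := ι) n]
      exact congrArg Subgroup.closure (congrArg Set.range (funext he))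
    rw [← top_le_iff, ← comap_top g, ← hmap, comap_map_eq]
    exact sup_le_sup_left hker _
  set c := fun x : {x : ι × ι // x.1 < x.2} ↦ ⁅e x.1.1, e x.1.2⁆
  have hc x : c x ∈ center L := hcen (commutator_mem_commutator (mem_top _) (mem_top _))
  refine (card_dvd_of_le (commutator_le_closure_of_lt hgen hcen)).trans ?_
  refine (card_closure_dvd_pow_card (n := n) ?_ ?_).trans (pow_dvd_pow n ?_)
  · rintro x - _ ⟨y, rfl⟩
    exact mem_center_iff.1 (hc y) x
  · rintro _ ⟨x, rfl⟩
    rw [← commutatorElement_pow_left hcen, commutatorElement_eq_one_iff_mul_comm]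
    exact (mem_center_iff.1 (hpow _) _).symm
  · rw [← card_lt_pairs]
    exact Finite.card_range_le c

end ElementaryAbelian

/-- Normalized 2-cocycles of `Q` with values in the trivial module `B`. -/
structure NormalizedCocycle (Q B : Type*) [Group Q] [AddCommGroup B] where
  toFun : Q → Q → B
  map_one_left : ∀ x, toFun 1 x = 0
  cocycle : ∀ x y z, toFun x y + toFun (x * y) z = toFun y z + toFun x (y * z)

namespace NormalizedCocycle

variable {Q B : Type*} [Group Q] [AddCommGroup B]

instance : CoeFun (NormalizedCocycle Q B) fun _ ↦ Q → Q → B :=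
  ⟨toFun⟩

theorem map_one_right (f : NormalizedCocycle Q B) (x : Q) : f x 1 = 0 := by
  simpa [f.map_one_left] using f.cocycle x 1 1

/-- The central extension of `Q` by `B` with cocycle `f`, on the set `Q × B`. -/
@[ext]
structure Extension (f : NormalizedCocycle Q B) where
  base : Q
  fiber : B

namespace Extension

variable {f : NormalizedCocycle Q B}

instance : Mul f.Extension :=
  ⟨fun x y ↦ ⟨x.base * y.base, x.fiber + y.fiber + f x.base y.base⟩⟩

instance : One f.Extension :=
  ⟨⟨1, 0⟩⟩

instance : Inv f.Extension :=
  ⟨fun x ↦ ⟨x.base⁻¹, -x.fiber - f x.base⁻¹ x.base⟩⟩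

theorem mul_def (x y : f.Extension) :
    x * y = ⟨x.base * y.base, x.fiber + y.fiber + f x.base y.base⟩ :=
  rfl

instance : Group f.Extension := by
  refine .ofLeftAxioms (fun x y z ↦ Extension.ext (mul_assoc _ _ _) ?_)
    (fun x ↦ Extension.ext (one_mul _) ?_) (fun x ↦ Extension.ext (inv_mul_cancel _) ?_)
  · change x.fiber + y.fiber + f x.base y.base + z.fiber + f (x.base * y.base) z.base =
      x.fiber + (y.fiber + z.fiber + f y.base z.base) + f x.base (y.base * z.base)
    calc
      _ = x.fiber + y.fiber + z.fiber + (f x.base y.base + f (x.base * y.base) z.base) := by abel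
      _ = _ := by rw [f.cocycle]; abel
  · change 0 + x.fiber + f 1 x.base = x.fiber
    rw [f.map_one_left, add_zero, zero_add]
  · change -x.fiber - f x.base⁻¹ x.base + x.fiber + f x.base⁻¹ x.base = 0
    abel

/-- The projection of a central extension onto the group that it extends. -/
def proj (f : NormalizedCocycle Q B) : f.Extension →* Q where
  toFun := base
  map_one' := rfl
  map_mul' _ _ := rfl

theorem proj_surjective : Function.Surjective (proj f) := fun x ↦ ⟨⟨x, 0⟩, rfl⟩

/-- The inclusion of the kernel of a central extension. -/
def incl (f : NormalizedCocycle Q B) : Multiplicative B →* f.Extension where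
  toFun b := ⟨1, b.toAdd⟩
  map_one' := rfl
  map_mul' b c := Extension.ext (one_mul 1).symm (by simp [mul_def, f.map_one_left])

theorem incl_injective : Function.Injective (incl f) := fun _ _ h ↦ congrArg fiber h

theorem ker_proj_le_center : (proj f).ker ≤ center f.Extension := by
  rintro ⟨x, b⟩ (rfl : x = 1)
  refine mem_center_iff.2 fun y ↦ Extension.ext ?_ ?_
  · exact (mul_one y.base).trans (one_mul y.base).symm
  · change y.fiber + b + f y.base 1 = b + y.fiber + f 1 y.base
    rw [f.map_one_left, f.map_one_right, add_comm b]

theorem commutatorElement_eq {x y : f.Extension} (h : Commute x.base y.base) :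
    ⁅x, y⁆ = incl f (.ofAdd (f x.base y.base - f y.base x.base)) := by
  rw [commutatorElement_def, mul_inv_eq_iff_eq_mul, mul_inv_eq_iff_eq_mul]
  refine Extension.ext ?_ ?_
  · change x.base * y.base = 1 * y.base * x.base
    rw [h.eq, one_mul]
  · change x.fiber + y.fiber + f x.base y.base = f x.base y.base - f y.base x.base + y.fiber
      + f 1 y.base + x.fiber + f (1 * y.base) x.base
    rw [f.map_one_left, one_mul]
    abel

end Extension

end NormalizedCocycle

section PairExtension

variable {ι : Type*} [LinearOrder ι]

/-- The cocycle on `(ℤ/n)^ι` whose component at a pair `i < j` is `u i * v j`. In its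
extension the commutators of lifts of the basis vectors form a basis of the fibre. -/
def pairCocycle (ι : Type*) [LinearOrder ι] (n : ℕ) :
    NormalizedCocycle (Multiplicative (ι → ZMod n)) ({x : ι × ι // x.1 < x.2} → ZMod n) where
  toFun u v x := u.toAdd x.1.1 * v.toAdd x.1.2
  map_one_left v := by ext; simp
  cocycle u v w := by ext; simp; ring

theorem range_incl_le_commutator_pairExtension [Finite ι] (n : ℕ) :
    (NormalizedCocycle.Extension.incl (pairCocycle ι n)).range ≤ commutator _ := by
  rw [MonoidHom.range_eq_map, ← closure_range_ofAdd_single, MonoidHom.map_closure, closure_le]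
  rintro _ ⟨_, ⟨⟨⟨i, j⟩, hij⟩, rfl⟩, rfl⟩
  let e (k : ι) : (pairCocycle ι n).Extension := ⟨.ofAdd (Pi.single k 1), 0⟩
  have hcomm : ⁅e i, e j⁆ =
      NormalizedCocycle.Extension.incl _ (.ofAdd (Pi.single ⟨(i, j), hij⟩ 1)) := by
    rw [NormalizedCocycle.Extension.commutatorElement_eq (Commute.all _ _)]
    congr 2
    ext ⟨⟨k, l⟩, hkl⟩
    have : ¬(k = j ∧ l = i) := by
      rintro ⟨rfl, rfl⟩
      exact lt_asymm hij hkl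
    simp only [e, pairCocycle, Pi.sub_apply, toAdd_ofAdd, Pi.single_apply, Subtype.mk.injEq,
      Prod.mk.injEq, mul_ite, mul_one, mul_zero, ← ite_and]
    grind
  rw [← hcomm]
  exact commutator_mem_commutator (mem_top _) (mem_top _)

theorem pow_choose_dvd_card_commutator_pairExtension [Fintype ι] (n : ℕ) [NeZero n] :
    n ^ (Fintype.card ι).choose 2 ∣ Nat.card (commutator (pairCocycle ι n).Extension) := by
  have hcard := card_dvd_of_le (range_incl_le_commutator_pairExtension (ι := ι) n)
  rwa [← Nat.card_congr
      (MonoidHom.ofInjective NormalizedCocycle.Extension.incl_injective).toEquiv,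
    Nat.card_congr Multiplicative.toAdd, Nat.card_fun, Nat.card_zmod, card_lt_pairs] at hcard

end PairExtension

namespace FreeCentralExtension

variable {G : Type*} [Group G]

theorem relIndex_commutator_eq {ι : Type*} [Fintype ι] [LinearOrder ι] {n : ℕ} [NeZero n]
    {φ : G →* Multiplicative (ι → ZMod n)} (hφ : Function.Surjective φ) :
    ⁅(⊤ : Subgroup (FreeCentralExtension G)), (φ.comp (proj G)).ker⁆.relIndex
      (commutator (FreeCentralExtension G)) = n ^ (Fintype.card ι).choose 2 := by
  set f := φ.comp (proj G)
  set N := ⁅(⊤ : Subgroup (FreeCentralExtension G)), f.ker⁆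
  have hf : Function.Surjective f := hφ.comp proj_surjective
  apply Nat.dvd_antisymm
  · rw [← QuotientGroup.ker_mk' N, relIndex_ker,
      map_commutator_of_surjective (QuotientGroup.mk'_surjective N)]
    exact card_commutator_dvd_of_central
      (QuotientGroup.lift_surjective_of_surjective N f hf (commutator_le_right _ _))
      (ker_quotientLift_le_center f)
  · obtain ⟨ψ, hψ, hrange⟩ := exists_lift_of_surjective hφ
      (NormalizedCocycle.Extension.proj_surjective (f := pairCocycle ι n))
      NormalizedCocycle.Extension.ker_proj_le_center
    have hN : N ≤ ψ.ker := by
      refine commutator_le.2 fun x _ y hy ↦ ?_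
      have hψy : ψ y ∈ center _ := NormalizedCocycle.Extension.ker_proj_le_center <| by
        rwa [MonoidHom.mem_ker, ← MonoidHom.comp_apply, hψ]
      rw [MonoidHom.mem_ker, map_commutatorElement, commutatorElement_eq_one_iff_mul_comm]
      exact mem_center_iff.1 hψy _
    refine (pow_choose_dvd_card_commutator_pairExtension (ι := ι) n).trans ?_
    rw [← map_commutator_of_range_sup_center hrange, ← relIndex_ker]
    exact relIndex_dvd_of_le_left _ hN

theorem card_schurMultiplier_eq_iff {ι : Type*} [Fintype ι] {p : ℕ} (hp : p.Prime)
    (hcard : Nat.card (commutator G) = p) (hcen : commutator G ≤ center G)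
    {φ : G →* Multiplicative (ι → ZMod p)} (hφ : Function.Surjective φ)
    (hker : φ.ker = commutator G) :
    Nat.card (SchurMultiplier G) = p ^ ((Fintype.card ι).choose 2 - 1) ↔
      commutator (FreeCentralExtension G) ≤ center (FreeCentralExtension G) := by
  have : NeZero p := ⟨hp.ne_zero⟩
  let _ : LinearOrder ι := LinearOrder.lift' _ (Fintype.equivFin ι).injective
  set K' := commutator (FreeCentralExtension G)
  set N := ⁅(⊤ : Subgroup (FreeCentralExtension G)), (φ.comp (proj G)).ker⁆
  have hker' : (φ.comp (proj G)).ker = K' ⊔ (proj G).ker := by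
    rw [← MonoidHom.comap_ker, hker, ← map_proj_commutator, comap_map_eq]
  have hN : N.relIndex K' = p ^ (Fintype.card ι).choose 2 := relIndex_commutator_eq hφ
  have hNker : N ≤ (proj G).ker := by
    refine commutator_le.2 fun x _ y hy ↦ ?_
    have hy' : proj G y ∈ commutator G := hker ▸ hy
    rw [MonoidHom.mem_ker, map_commutatorElement, commutatorElement_eq_one_iff_mul_comm]
    exact mem_center_iff.1 (hcen hy') _
  have hchoose : (Fintype.card ι).choose 2 ≠ 0 := by
    intro h0
    have hdvd : p ∣ N.relIndex K' := by
      rw [← hcard, ← map_proj_commutator, ← relIndex_ker]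
      exact relIndex_dvd_of_le_left _ hNker
    rw [hN, h0, pow_zero] at hdvd
    exact hp.not_dvd_one hdvd
  have hcardM : Nat.card (SchurMultiplier G) =
      Nat.card N * p ^ ((Fintype.card ι).choose 2 - 1) := by
    refine Nat.eq_of_mul_eq_mul_right hp.pos ?_
    rw [mul_assoc, pow_sub_one_mul hchoose, ← hN, ← relIndex_bot_left N,
      relIndex_mul_relIndex _ _ K' bot_le (commutator_mono le_rfl le_top), relIndex_bot_left,
      ← card_schurMultiplier_mul_card_commutator, hcard]
  rw [hcardM, Nat.mul_eq_right (pow_ne_zero _ hp.ne_zero), card_eq_one,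
    commutator_top_left_eq_bot_iff_le_center, hker', sup_le_iff, and_iff_left ker_proj_le_center]

end FreeCentralExtension

section SufficientCriterion

variable {G K : Type*} [Group G] [Group K] {π : K →* G} {p : ℕ} [Fact p.Prime]

theorem mem_centralizer_comap_of_commute (hker : π.ker ≤ center K) {P : Subgroup G}
    (hP : Nat.card P = p) {w u : K} (hu : π u ∈ P) (hu1 : π u ≠ 1) (hwu : Commute w u) :
    w ∈ centralizer (P.comap π : Set K) := by
  refine mem_centralizer_iff.2 fun c hc ↦ ?_
  have hgen : zpowers (⟨π u, hu⟩ : P) = ⊤ :=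
    zpowers_eq_top_of_prime_card hP (mt (congrArg Subtype.val) hu1)
  obtain ⟨k, hk⟩ := mem_zpowers_iff.1 (hgen ▸ mem_top (⟨π c, hc⟩ : P))
  have hk' : π u ^ k = π c := congrArg Subtype.val hk
  have hcu : (u ^ k)⁻¹ * c ∈ center K :=
    hker (by rw [MonoidHom.mem_ker, map_mul, map_inv, map_zpow, hk', inv_mul_cancel])
  have hw : Commute w (u ^ k * ((u ^ k)⁻¹ * c)) :=
    (hwu.zpow_right k).mul_right (mem_center_iff.1 hcu w)
  rw [mul_inv_cancel_left] at hw
  exact hw.symm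

theorem commute_commutatorElement_of_map_commute (hker : π.ker ≤ center K) {w x y : K}
    (hx : Commute (π w) (π x)) (hy : Commute (π w) (π y)) : Commute w ⁅x, y⁆ := by
  have hcen {z : K} (hz : Commute (π w) (π z)) : z⁻¹ * (w * z * w⁻¹) ∈ center K := by
    refine hker ?_
    rw [MonoidHom.mem_ker, map_mul, map_mul, map_mul, map_inv, map_inv, hz.eq,
      mul_inv_cancel_right, inv_mul_cancel]
  have hconj : w * ⁅x, y⁆ * w⁻¹ = ⁅x, y⁆ := by
    rw [conjugate_commutatorElement, ← mul_inv_cancel_left x (w * x * w⁻¹),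
      ← mul_inv_cancel_left y (w * y * w⁻¹), commutatorElement_mul_left_of_mem_center (hcen hx),
      commutatorElement_mul_right_of_mem_center (hcen hy)]
  exact mul_inv_eq_iff_eq_mul.1 hconj

theorem commutator_le_center_of_closure_eq_top (hcard : Nat.card (commutator G) = p)
    (hpow : ∀ x : G, x ^ p ∈ commutator G)
    (hgen : closure {w : G | w ^ p ≠ 1 ∨ ∃ x y, Commute w x ∧ Commute w y ∧ ¬Commute x y} = ⊤)
    (hπ : Function.Surjective π) (hker : π.ker ≤ center K) : commutator K ≤ center K := by
  set C := centralizer ((commutator G).comap π : Set K)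
  have hmem : ∀ w, π w ^ p ≠ 1 ∨ (∃ x y, Commute (π w) x ∧ Commute (π w) y ∧ ¬Commute x y) →
      w ∈ C := by
    rintro w (hw | ⟨x, y, hwx, hwy, hxy⟩)
    · rw [← map_pow] at hw
      exact mem_centralizer_comap_of_commute hker hcard (map_pow π w p ▸ hpow _) hw
        (Commute.self_pow w p)
    · obtain ⟨x, rfl⟩ := hπ x
      obtain ⟨y, rfl⟩ := hπ y
      refine mem_centralizer_comap_of_commute (u := ⁅x, y⁆) hker hcard ?_ ?_
        (commute_commutatorElement_of_map_commute hker hwx hwy) <;>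
        rw [map_commutatorElement]
      · exact commutator_mem_commutator (mem_top _) (mem_top _)
      · exact mt commutatorElement_eq_one_iff_commute.1 hxy
  have hmap : C.map π = ⊤ := by
    rw [← top_le_iff, ← hgen, closure_le]
    intro w hw
    obtain ⟨w, rfl⟩ := hπ w
    exact mem_map_of_mem π (hmem w hw)
  have hC : C = ⊤ := by
    rw [← sup_eq_left.2 (show π.ker ≤ C from hker.trans (center_le_centralizer _)),
      ← comap_map_eq, hmap, comap_top]
  refine le_trans (map_le_iff_le_comap.1 ?_) (centralizer_eq_top_iff_subset.1 hC)
  exact (map_commutator_of_surjective hπ).le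

end SufficientCriterion

section ElementaryAbelian

variable {A : Type*} [CommGroup A] {p : ℕ}

theorem nonempty_mulEquiv_multiplicative_pi_zmod {d : ℕ} (hp : p.Prime) (hA : Nat.card A = p ^ d)
    (hpow : ∀ x : A, x ^ p = 1) : Nonempty (A ≃* Multiplicative (Fin d → ZMod p)) := by
  have : Fact p.Prime := ⟨hp⟩
  let _ : Module (ZMod p) (Additive A) := AddCommGroup.zmodModule (n := p) fun x ↦ hpow x.toMul
  have : Finite A := Nat.finite_of_card_ne_zero (hA ▸ pow_ne_zero _ hp.ne_zero)
  have hrank : Module.finrank (ZMod p) (Additive A) = d := by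
    have hcard := Module.natCard_eq_pow_finrank (K := ZMod p) (V := Additive A)
    rw [Nat.card_congr Additive.toMul, hA, Nat.card_zmod] at hcard
    exact (Nat.pow_right_injective hp.two_le hcard).symm
  let e := (Module.finBasisOfFinrankEq (ZMod p) (Additive A) hrank).equivFun
  exact ⟨MulEquiv.toAdditiveLeft.symm e.toAddEquiv⟩

theorem exists_isCompl_of_pow_eq_one (hp : p.Prime) (hpow : ∀ x : A, x ^ p = 1)
    (B : Subgroup A) : ∃ C : Subgroup A, IsCompl B C := by
  have : Fact p.Prime := ⟨hp⟩
  let _ : Module (ZMod p) (Additive A) := AddCommGroup.zmodModule (n := p) fun x ↦ hpow x.toMul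
  let e : Subgroup A ≃o Submodule (ZMod p) (Additive A) :=
    toAddSubgroup.trans (AddSubgroup.toZModSubmodule p)
  obtain ⟨C, hC⟩ := exists_isCompl (e B)
  exact ⟨e.symm C, by simpa using e.symm.isCompl hC⟩

end ElementaryAbelian

section CenterIndex

variable {G : Type*} [Group G] {p : ℕ} {x y : G}

/-- The homomorphism `g ↦ (⁅g, x⁆, ⁅g, y⁆)`, whose kernel centralizes `x` and `y`. -/
def commutatorPairHom (hG : commutator G ≤ center G) (x y : G) :
    G →* commutator G × commutator G :=
  (commutatorHom hG x).prod (commutatorHom hG y)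

theorem mem_ker_commutatorPairHom {hG : commutator G ≤ center G} {g : G} :
    g ∈ (commutatorPairHom hG x y).ker ↔ Commute g x ∧ Commute g y := by
  rw [commutatorPairHom, MonoidHom.ker_prod, mem_inf, mem_ker_commutatorHom,
    mem_ker_commutatorHom]

theorem map_commutatorPairHom_closure_pair [Fact p.Prime] (hG : commutator G ≤ center G)
    (hcard : Nat.card (commutator G) = p) (hxy : ¬Commute x y) :
    (closure {x, y}).map (commutatorPairHom hG x y) = ⊤ := by
  set f := commutatorPairHom hG x y
  have hne {a b : G} (hab : ¬Commute a b) : commutatorHom hG b a ≠ 1 :=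
    mt (fun h ↦ mem_ker_commutatorHom.1 (MonoidHom.mem_ker.2 h)) hab
  have hself (a : G) : commutatorHom hG a a = 1 :=
    MonoidHom.mem_ker.1 (mem_ker_commutatorHom.2 (Commute.refl a))
  rw [← top_le_iff]
  rintro ⟨a, b⟩ -
  obtain ⟨i, rfl⟩ := mem_zpowers_of_prime_card hcard (hne (mt Commute.symm hxy)) (g' := a)
  obtain ⟨j, rfl⟩ := mem_zpowers_of_prime_card hcard (hne hxy) (g' := b)
  refine ⟨y ^ i * x ^ j, mul_mem (zpow_mem (Subgroup.subset_closure (by simp)) i)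
    (zpow_mem (Subgroup.subset_closure (by simp)) j), ?_⟩
  simp [f, commutatorPairHom, hself]

theorem index_ker_commutatorPairHom [Fact p.Prime] (hG : commutator G ≤ center G)
    (hcard : Nat.card (commutator G) = p) (hxy : ¬Commute x y) :
    (commutatorPairHom hG x y).ker.index = p ^ 2 := by
  have hrange : (commutatorPairHom hG x y).range = ⊤ := by
    rw [← top_le_iff, ← map_commutatorPairHom_closure_pair hG hcard hxy, MonoidHom.range_eq_map]
    exact map_mono le_top
  rw [index_ker, hrange, card_top, Nat.card_prod, hcard, sq]

theorem mem_center_of_commute_ker_commutatorPairHom [Fact p.Prime] {hG : commutator G ≤ center G}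
    (hcard : Nat.card (commutator G) = p) (hxy : ¬Commute x y) {z : G}
    (hz : z ∈ (commutatorPairHom hG x y).ker)
    (hcomm : ∀ g ∈ (commutatorPairHom hG x y).ker, Commute g z) : z ∈ center G := by
  set f := commutatorPairHom hG x y
  have hgen : closure {x, y} ⊔ f.ker = ⊤ := by
    rw [← comap_map_eq, map_commutatorPairHom_closure_pair hG hcard hxy, comap_top]
  obtain ⟨hzx, hzy⟩ := mem_ker_commutatorPairHom.1 hz
  have hle : closure {x, y} ⊔ f.ker ≤ centralizer {z} := by
    refine sup_le ((closure_le _).2 ?_) fun g hg ↦ mem_centralizer_singleton_iff.2 (hcomm g hg)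
    rintro _ (rfl | rfl)
    exacts [mem_centralizer_singleton_iff.2 hzx.symm, mem_centralizer_singleton_iff.2 hzy.symm]
  exact mem_center_iff.2 fun g ↦ mem_centralizer_singleton_iff.1 (hle (hgen ▸ mem_top g))

theorem exists_index_center_eq_pow_two_mul [Finite G] [Fact p.Prime]
    (hG : commutator G ≤ center G) (hcard : Nat.card (commutator G) ∣ p) :
    ∃ m, (center G).index = p ^ (2 * m) := by
  induction h : Nat.card G using Nat.strong_induction_on generalizing G with
  | _ k ih =>
  by_cases hab : ∀ x y : G, Commute x y
  · refine ⟨0, ?_⟩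
    rw [mul_zero, pow_zero, index_eq_one, eq_top_iff]
    exact fun x _ ↦ mem_center_iff.2 fun y ↦ hab y x
  push Not at hab
  obtain ⟨x, y, hxy⟩ := hab
  have hcard' : Nat.card (commutator G) = p := by
    refine ((Nat.dvd_prime Fact.out).1 hcard).resolve_left fun h1 ↦ hxy ?_
    rw [card_eq_one] at h1
    rw [← commutatorElement_eq_one_iff_commute, ← mem_bot, ← h1]
    exact commutator_mem_commutator (mem_top x) (mem_top y)
  set A := (commutatorPairHom hG x y).ker
  have hcomm : (commutator A).map A.subtype ≤ commutator G := by
    rw [commutator_def, map_commutator]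
    exact commutator_mono le_top le_top
  have hcenA : (center A).map A.subtype = center G := by
    refine le_antisymm ?_ fun z hz ↦ ?_
    · rintro _ ⟨z, hz, rfl⟩
      exact mem_center_of_commute_ker_commutatorPairHom hcard' hxy z.2 fun g hg ↦
        congrArg Subtype.val (mem_center_iff.1 hz ⟨g, hg⟩)
    · have hzA : z ∈ A := mem_ker_commutatorPairHom.2
        ⟨(mem_center_iff.1 hz x).symm, (mem_center_iff.1 hz y).symm⟩
      exact ⟨⟨z, hzA⟩, mem_center_iff.2 fun g ↦ Subtype.ext (mem_center_iff.1 hz g), rfl⟩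
  have hindex : A.index = p ^ 2 := index_ker_commutatorPairHom hG hcard' hxy
  have hlt : Nat.card A < k := by
    rw [← h, ← A.card_mul_index, hindex]
    exact lt_mul_of_one_lt_right Nat.card_pos (one_lt_pow₀ (Fact.out : p.Prime).one_lt two_ne_zero)
  have hA : commutator A ≤ center A :=
    (map_le_map_iff_of_injective A.subtype_injective).1 (hcenA ▸ hcomm.trans hG)
  have hcardA : Nat.card (commutator A) ∣ p := by
    rw [← card_map_of_injective A.subtype_injective]
    exact (card_dvd_of_le hcomm).trans hcard
  obtain ⟨m, hm⟩ := ih _ hlt hA hcardA rfl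
  refine ⟨m + 1, ?_⟩
  rw [← hcenA, index_map_subtype, hm, hindex, ← pow_add, mul_add_one]

theorem exists_commute_not_commute_of_lt_index_center [Finite G] [Fact p.Prime]
    (hG : commutator G ≤ center G) (hcard : Nat.card (commutator G) = p)
    (hindex : p ^ 2 < (center G).index) (w : G) :
    ∃ x y, Commute w x ∧ Commute w y ∧ ¬Commute x y := by
  by_contra! hab
  have hw : ∃ g, ¬Commute w g := by
    by_contra! hw
    have htop : center G = ⊤ := eq_top_iff.2 fun x _ ↦
      mem_center_iff.2 fun y ↦ hab y x (hw y) (hw x)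
    rw [htop, index_top] at hindex
    exact hindex.not_ge (Nat.one_le_pow _ _ (Fact.out : p.Prime).pos)
  obtain ⟨g, hg⟩ := hw
  have hle : (commutatorPairHom hG w g).ker ≤ center G := fun z hz ↦
    mem_center_of_commute_ker_commutatorPairHom hcard hg hz fun a ha ↦
      hab a z (mem_ker_commutatorPairHom.1 ha).1.symm (mem_ker_commutatorPairHom.1 hz).1.symm
  have hdvd := index_dvd_of_le hle
  rw [index_ker_commutatorPairHom hG hcard hg] at hdvd
  exact hindex.not_ge (Nat.le_of_dvd (pow_pos (Fact.out : p.Prime).pos 2) hdvd)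

end CenterIndex

section Decomposition

variable {G : Type*} [Group G] {p : ℕ}

theorem exists_inf_eq_sup_eq_top {N B : Subgroup G} (hp : p.Prime) (hN : commutator G ≤ N)
    (hpow : ∀ x : G, x ^ p ∈ N) (hNB : N ≤ B) : ∃ H : Subgroup G, H ⊓ B = N ∧ H ⊔ B = ⊤ := by
  have hnormal : N.Normal := .of_commutator_le G hN
  let _ : CommGroup (G ⧸ N) :=
    { mul_comm := (Normal.quotient_commutative_iff_commutator_le.2 hN).is_comm.comm }
  have hpow' (x : G ⧸ N) : x ^ p = 1 := by
    obtain ⟨x, rfl⟩ := QuotientGroup.mk_surjective x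
    exact (QuotientGroup.eq_one_iff _).2 (hpow x)
  obtain ⟨C, hC⟩ := exists_isCompl_of_pow_eq_one hp hpow' (B.map (QuotientGroup.mk' N))
  have hB : (B.map (QuotientGroup.mk' N)).comap (QuotientGroup.mk' N) = B := by
    rw [comap_map_eq, QuotientGroup.ker_mk', sup_eq_left.2 hNB]
  refine ⟨C.comap (QuotientGroup.mk' N), ?_, ?_⟩
  · rw [← hB, ← comap_inf, hC.symm.inf_eq_bot, MonoidHom.comap_bot, QuotientGroup.ker_mk']
  · rw [← hB, comap_sup_eq _ _ _ (QuotientGroup.mk'_surjective N), hC.symm.sup_eq_top, comap_top]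

theorem frattini_le_of_pow_mem [Finite G] {N : Subgroup G} (hp : p.Prime)
    (hN : commutator G ≤ N) (hpow : ∀ x : G, x ^ p ∈ N) : frattini G ≤ N := by
  obtain ⟨H, hinf, hsup⟩ := exists_inf_eq_sup_eq_top hp hN hpow (le_sup_left (b := frattini G))
  have hNH : N ≤ H := hinf ▸ inf_le_left
  rw [← sup_assoc, sup_eq_left.2 hNH] at hsup
  rw [frattini_nongenerating hsup, top_inf_eq] at hinf
  exact sup_eq_left.1 hinf

theorem commutator_le_frattini (hG : commutator G ≤ center G) : commutator G ≤ frattini G := by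
  refine le_iInf₂ fun M hM ↦ ?_
  by_cases hZ : center G ≤ M
  · exact hG.trans hZ
  · have htop : M.subtype.range ⊔ center G = ⊤ := by
      rw [range_subtype]
      exact hM.2 _ (left_lt_sup.2 hZ)
    rw [← map_commutator_of_range_sup_center htop]
    exact map_subtype_le _

theorem isExtraspecial_of_center_eq_commutator [Finite G] (hp : p.Prime)
    (h : center G = commutator G) (hcard : Nat.card (commutator G) = p) : IsExtraspecial p G := by
  have hpow (x : G) : x ^ p ∈ commutator G := by
    rw [← h, mem_center_iff]
    intro y
    have hy : ⁅x, y⁆ ∈ commutator G := commutator_mem_commutator (mem_top x) (mem_top y)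
    rw [eq_comm, ← commutatorElement_eq_one_iff_mul_comm, commutatorElement_pow_left h.ge, ← hcard]
    exact congrArg Subtype.val (pow_card_eq_one' (x := (⟨_, hy⟩ : commutator G)))
  refine ⟨h, h.trans (le_antisymm (commutator_le_frattini h.ge) ?_), h ▸ hcard⟩
  exact frattini_le_of_pow_mem hp le_rfl hpow

theorem center_eq_commutator_of_mulEquiv {H : Type*} [Group H] (e : G ≃* H)
    (h : center G = commutator G) : center H = commutator H := by
  have hmem {x : H} (hx : x ∈ center H) : e.symm x ∈ center G :=
    map_mem_center_of_range_sup_center (f := e.symm.toMonoidHom)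
      (by rw [MonoidHom.range_eq_top.2 e.symm.surjective, top_sup_eq]) hx
  have hrange : e.toMonoidHom.range ⊔ center H = ⊤ := by
    rw [MonoidHom.range_eq_top.2 e.surjective, top_sup_eq]
  rw [← map_commutator_of_range_sup_center hrange, ← h]
  refine le_antisymm (fun x hx ↦ ⟨e.symm x, hmem hx, e.apply_symm_apply x⟩) ?_
  rintro _ ⟨x, hx, rfl⟩
  exact map_mem_center_of_range_sup_center hrange hx

theorem nonempty_mulEquiv_prod_of_isCompl {H T : Subgroup G} (hT : T ≤ center G)
    (h : IsCompl H T) : Nonempty (G ≃* H × T) := by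
  have hcomm (x : H) (y : T) : Commute (H.subtype x) (T.subtype y) := mem_center_iff.1 (hT y.2) x
  refine ⟨(MulEquiv.ofBijective (H.subtype.noncommCoprod T.subtype hcomm) ⟨?_, ?_⟩).symm⟩
  · rw [MonoidHom.noncommCoprod_injective, range_subtype, range_subtype]
    exact ⟨H.subtype_injective, T.subtype_injective, h.disjoint⟩
  · rw [← MonoidHom.range_eq_top, MonoidHom.noncommCoprod_range, range_subtype, range_subtype,
      h.sup_eq_top]

open scoped IsMulCommutative in
theorem exists_isCompl_in_center (hp : p.Prime) (hZ : ∀ z ∈ center G, z ^ p = 1) {N : Subgroup G}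
    (hN : N ≤ center G) : ∃ T ≤ center G, N ⊓ T = ⊥ ∧ N ⊔ T = center G := by
  obtain ⟨T, hT⟩ := exists_isCompl_of_pow_eq_one hp
    (fun z : center G ↦ Subtype.ext (hZ z z.2)) (N.subgroupOf (center G))
  have hNmap : (N.subgroupOf (center G)).map (center G).subtype = N := by
    rw [subgroupOf_map_subtype, inf_eq_left.2 hN]
  refine ⟨T.map (center G).subtype, map_subtype_le T, ?_, ?_⟩
  · rw [← hNmap, ← map_inf_eq _ _ _ (center G).subtype_injective, hT.inf_eq_bot, Subgroup.map_bot]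
  · conv_lhs => rw [← hNmap]
    rw [← Subgroup.map_sup, hT.sup_eq_top, ← MonoidHom.range_eq_map, range_subtype]

theorem center_eq_commutator_of_inf_center {H : Subgroup G} (hinf : H ⊓ center G = commutator G)
    (hsup : H ⊔ center G = ⊤) : center H = commutator H := by
  have hrange : H.subtype.range ⊔ center G = ⊤ := by rwa [range_subtype]
  refine map_injective H.subtype_injective ?_
  rw [map_commutator_of_range_sup_center hrange, ← hinf]
  refine le_antisymm ?_ fun z hz ↦ ?_
  · rintro _ ⟨z, hz, rfl⟩
    exact ⟨z.2, map_mem_center_of_range_sup_center hrange hz⟩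
  · exact ⟨⟨z, hz.1⟩, mem_center_iff.2 fun g ↦ Subtype.ext (mem_center_iff.1 hz.2 g), rfl⟩

theorem exists_mulEquiv_prod_of_commutator_le_center (hp : p.Prime)
    (hcen : commutator G ≤ center G) (hpow : ∀ x : G, x ^ p ∈ commutator G)
    (hZ : ∀ z ∈ center G, z ^ p = 1) :
    ∃ H T : Subgroup G, center H = commutator H ∧
      Nat.card (commutator H) = Nat.card (commutator G) ∧ T ≤ center G ∧
      Nonempty (G ≃* H × T) := by
  obtain ⟨H, hinf, hsup⟩ := exists_inf_eq_sup_eq_top hp le_rfl hpow hcen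
  obtain ⟨T, hT, hinfT, hsupT⟩ := exists_isCompl_in_center hp hZ hcen
  have hcompl : IsCompl H T := by
    refine IsCompl.of_eq ?_ ?_
    · rw [← inf_eq_right.2 hT, ← inf_assoc, hinf, hinfT]
    · rw [eq_top_iff, ← hsup, ← hsupT]
      exact sup_le le_sup_left (sup_le (hinf ▸ inf_le_left.trans le_sup_left) le_sup_right)
  refine ⟨H, T, center_eq_commutator_of_inf_center hinf hsup, ?_, hT,
    nonempty_mulEquiv_prod_of_isCompl hT hcompl⟩
  rw [← map_commutator_of_range_sup_center (f := H.subtype) (by rwa [range_subtype]),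
    card_map_of_injective H.subtype_injective]

theorem IsExtraspecial.exists_card_eq [Finite G] (hp : p.Prime) (hG : IsExtraspecial p G) :
    ∃ m, 1 ≤ m ∧ Nat.card G = p ^ (2 * m + 1) := by
  have : Fact p.Prime := ⟨hp⟩
  obtain ⟨hcen, -, hcard⟩ := hG
  obtain ⟨m, hm⟩ := exists_index_center_eq_pow_two_mul hcen.ge (hcen ▸ hcard).dvd
  refine ⟨m, Nat.one_le_iff_ne_zero.2 ?_, ?_⟩
  · rintro rfl
    have htop : center G = ⊤ := index_eq_one.1 (hm.trans (pow_zero p))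
    rw [hcen, (commutator_eq_bot_iff_center_eq_top G).2 htop, card_bot] at hcard
    exact hp.one_lt.ne hcard
  · rw [← (center G).card_mul_index, hcard, hm, pow_succ']

theorem exists_mulEquiv_isExtraspecial_prod {n : ℕ} (hp : p.Prime)
    (hG : Nat.card G = p ^ n) (hcard : Nat.card (commutator G) = p)
    (hcen : commutator G ≤ center G) (hpow : ∀ x : G, x ^ p ∈ commutator G)
    (hZ : ∀ z ∈ center G, z ^ p = 1) :
    ∃ (H : Type) (_ : Group H) (m : ℕ), 1 ≤ m ∧ IsExtraspecial p H ∧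
      Nat.card H = p ^ (2 * m + 1) ∧
      Nonempty (G ≃* H × (Fin (n - 2 * m - 1) → Multiplicative (ZMod p))) := by
  have : Finite G := Nat.finite_of_card_ne_zero (hG ▸ pow_ne_zero n hp.ne_zero)
  obtain ⟨H, T, hHcen, hHcard, hT, ⟨e⟩⟩ :=
    exists_mulEquiv_prod_of_commutator_le_center hp hcen hpow hZ
  let eH : H ≃* Shrink.{0} H := (Shrink.mulEquiv : Shrink.{0} H ≃* H).symm
  have hcardS : Nat.card (commutator (Shrink.{0} H)) = p := by
    rw [← map_commutator_of_surjective (f := eH.toMonoidHom) eH.surjective,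
      card_map_of_injective eH.injective, hHcard, hcard]
  have hextra : IsExtraspecial p (Shrink.{0} H) :=
    isExtraspecial_of_center_eq_commutator hp (center_eq_commutator_of_mulEquiv eH hHcen) hcardS
  obtain ⟨m, hm, hcardH⟩ := hextra.exists_card_eq hp
  have hcardT : p ^ (2 * m + 1) * Nat.card T = p ^ n := by
    rw [← hG, Nat.card_congr e.toEquiv, Nat.card_prod, Nat.card_congr eH.toEquiv, hcardH]
  have hmn : 2 * m + 1 ≤ n := (Nat.pow_dvd_pow_iff_le_right hp.one_lt).1 (Dvd.intro _ hcardT)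
  have hcardT' : Nat.card T = p ^ (n - 2 * m - 1) := by
    refine Nat.eq_of_mul_eq_mul_left (pow_pos hp.pos (2 * m + 1)) ?_
    rw [hcardT, Nat.sub_sub, pow_mul_pow_sub _ hmn]
  let _ : CommGroup T := { mul_comm := fun x y ↦ Subtype.ext (mem_center_iff.1 (hT y.2) x) }
  obtain ⟨eT⟩ := nonempty_mulEquiv_multiplicative_pi_zmod hp hcardT' fun x ↦
    Subtype.ext (hZ x (hT x.2))
  exact ⟨Shrink.{0} H, inferInstance, m, hm, hextra, hcardH,
    ⟨e.trans (eH.prodCongr (eT.trans (.funMultiplicative _ _)))⟩⟩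

end Decomposition

section PowerHom

variable {H : Type*} [Group H] {n : ℕ} {x y : H}

/-- The homomorphism `k ↦ x ^ k` from `ℤ/n`, for `x` of order dividing `n`. -/
def zmodPowersHom (hx : x ^ n = 1) : Multiplicative (ZMod n) →* H :=
  AddMonoidHom.toMultiplicativeLeft
    (ZMod.lift n ⟨zmultiplesHom (Additive H) (.ofMul x), by simpa using congrArg Additive.ofMul hx⟩)

theorem zmodPowersHom_intCast (hx : x ^ n = 1) (k : ℤ) :
    zmodPowersHom hx (.ofAdd (k : ZMod n)) = x ^ k :=
  congrArg Additive.toMul (ZMod.lift_coe n _ k)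

theorem zmodPowersHom_ofAdd_one (hx : x ^ n = 1) : zmodPowersHom hx (.ofAdd 1) = x := by
  rw [← Int.cast_one, zmodPowersHom_intCast, zpow_one]

theorem semiconjBy_zmodPowersHom (hx : x ^ n = 1) (h : SemiconjBy y x x⁻¹) (i : ZMod n) :
    SemiconjBy y (zmodPowersHom hx (.ofAdd i)) (zmodPowersHom hx (.ofAdd (-i))) := by
  obtain ⟨k, rfl⟩ := ZMod.intCast_surjective i
  rw [← Int.cast_neg, zmodPowersHom_intCast, zmodPowersHom_intCast, ← inv_zpow']
  exact h.zpow_right k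

/-- The homomorphism `a ↦ x`, `xa 0 ↦ y` given by the presentation of `QuaternionGroup n`. -/
def quaternionLift (hx : x ^ (2 * n) = 1) (hy : y ^ 2 = x ^ n) (h : SemiconjBy y x x⁻¹) :
    QuaternionGroup n →* H :=
  .mk' (fun
    | .a i => zmodPowersHom hx (.ofAdd i)
    | .xa i => y * zmodPowersHom hx (.ofAdd i)) <| by
    have hswap (i : ZMod (2 * n)) : zmodPowersHom hx (.ofAdd i) * y =
        y * zmodPowersHom hx (.ofAdd (-i)) := by
      rw [(semiconjBy_zmodPowersHom hx h (-i)).eq, neg_neg]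
    have hy' : y * y = zmodPowersHom hx (.ofAdd (n : ZMod (2 * n))) := by
      rw [← sq, hy, ← zpow_natCast, ← zmodPowersHom_intCast hx, Int.cast_natCast]
    rintro (i | i) (j | j)
    · simp only [QuaternionGroup.a_mul_a]
      rw [ofAdd_add, map_mul]
    · simp only [QuaternionGroup.a_mul_xa]
      rw [← mul_assoc, hswap, mul_assoc, ← map_mul, ← ofAdd_add,
        neg_add_eq_sub]
    · simp only [QuaternionGroup.xa_mul_a]
      rw [mul_assoc, ← map_mul, ← ofAdd_add]
    · simp only [QuaternionGroup.xa_mul_xa]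
      rw [mul_assoc, ← mul_assoc _ y, hswap, mul_assoc y, ← mul_assoc,
        hy', ← map_mul, ← map_mul, ← ofAdd_add, ← ofAdd_add, neg_add_eq_sub, add_sub_assoc]

end PowerHom

section MaximalClass

variable {R : Type*} [CommRing R]

/-- The symmetric square of the unipotent `2 × 2` matrix with off-diagonal entry `k`. -/
@[simps]
def symSquare (k : R) : R × R × R ≃+ R × R × R where
  toFun v := (v.1, v.2.1 + k * v.1, v.2.2 + 2 * k * v.2.1 + k ^ 2 * v.1)
  invFun v := (v.1, v.2.1 - k * v.1, v.2.2 - 2 * k * v.2.1 + k ^ 2 * v.1)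
  left_inv v := by ext <;> dsimp only <;> ring
  right_inv v := by ext <;> dsimp only <;> ring
  map_add' v w := by ext <;> dsimp only [Prod.fst_add, Prod.snd_add] <;> ring

theorem symSquare_add (k l : R) (v : R × R × R) :
    symSquare (k + l) v = symSquare k (symSquare l v) := by
  ext <;> simp only [symSquare_apply] <;> ring

variable (R) in
/-- The action of the additive group of `R` on `R³` by `symSquare`. -/
def symSquareAction : Multiplicative R →* MulAut (Multiplicative (R × R × R)) :=
  .mk' (fun k ↦ AddEquiv.toMultiplicative (symSquare k.toAdd)) fun k l ↦
    MulEquiv.ext fun v ↦ congrArg Multiplicative.ofAdd (symSquare_add k.toAdd l.toAdd v.toAdd)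

variable (R) in
/-- The group `R³ ⋊ R`. For `R = ℤ/p` with `p` odd it has order `p⁴` and maximal nilpotency
class three. -/
abbrev SymSquareGroup : Type _ :=
  Multiplicative (R × R × R) ⋊[symSquareAction R] Multiplicative R

theorem commutatorElement_inr_inl {N G : Type*} [Group N] [Group G] {φ : G →* MulAut N}
    (g : G) (v : N) :
    ⁅(SemidirectProduct.inr g : N ⋊[φ] G), (SemidirectProduct.inl v : N ⋊[φ] G)⁆ =
      SemidirectProduct.inl (φ g v * v⁻¹) := by
  rw [commutatorElement_def, map_mul, SemidirectProduct.inl_aut, map_inv, map_inv]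

theorem not_commutator_le_center_symSquareGroup (h2 : (2 : R) ≠ 0) :
    ¬commutator (SymSquareGroup R) ≤ center (SymSquareGroup R) := by
  intro h
  let x : SymSquareGroup R := SemidirectProduct.inr (.ofAdd 1)
  let y : SymSquareGroup R := SemidirectProduct.inl (.ofAdd (1, 0, 0))
  have hxy := mem_center_iff.1 (h (commutator_mem_commutator (mem_top x) (mem_top y))) x
  rw [← commutatorElement_eq_one_iff_mul_comm, commutatorElement_inr_inl,
    commutatorElement_inr_inl, SemidirectProduct.inl_injective.eq_iff' (map_one _)] at hxy
  have h0 : (symSquare 1 (symSquare 1 ((1 : R), (0 : R), (0 : R)) - (1, 0, 0)) -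
      (symSquare 1 ((1 : R), (0 : R), (0 : R)) - (1, 0, 0))).2.2 = 0 := by
    rw [sub_eq_add_neg, sub_eq_add_neg]
    exact congrArg (fun v ↦ v.toAdd.2.2) hxy
  exact h2 (by simpa using h0)

variable {H : Type*} [Group H] {p : ℕ}

theorem commutatorElement_zmodPowersHom (hH : commutator H ≤ center H)
    (hpow : ∀ w : H, w ^ p = 1) (x y : H) (k l : ZMod p) :
    ⁅zmodPowersHom (hpow x) (.ofAdd k), zmodPowersHom (hpow y) (.ofAdd l)⁆ =
      zmodPowersHom (hpow ⁅x, y⁆) (.ofAdd (k * l)) := by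
  obtain ⟨k, rfl⟩ := ZMod.intCast_surjective k
  obtain ⟨l, rfl⟩ := ZMod.intCast_surjective l
  rw [← Int.cast_mul]
  simp only [zmodPowersHom_intCast]
  rw [commutatorElement_zpow_left hH, ← commutatorElement_inv, commutatorElement_zpow_left hH,
    ← inv_zpow, commutatorElement_inv, ← zpow_mul, mul_comm]

theorem zmodPowersHom_mem_zpowers {n : ℕ} {x : H} (hx : x ^ n = 1) (k : Multiplicative (ZMod n)) :
    zmodPowersHom hx k ∈ zpowers x := by
  obtain ⟨l, hl⟩ := ZMod.intCast_surjective k.toAdd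
  exact ⟨l, (zmodPowersHom_intCast hx l).symm.trans (by rw [hl]; rfl)⟩

/-- The homomorphism `(a, b, c; k) ↦ y ^ a * ⁅x, y⁆ ^ b * x ^ k`. -/
def symSquareLift (hH : commutator H ≤ center H) (hpow : ∀ w : H, w ^ p = 1) (x y : H) :
    SymSquareGroup (ZMod p) →* H :=
  have hcen (b : Multiplicative (ZMod p)) (g : H) : Commute g (zmodPowersHom (hpow ⁅x, y⁆) b) :=
    mem_center_iff.1 (zpowers_le.2 (hH (commutator_mem_commutator (mem_top x) (mem_top y)))
      (zmodPowersHom_mem_zpowers _ b)) g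
  SemidirectProduct.lift
    { toFun v := zmodPowersHom (hpow y) (.ofAdd v.toAdd.1) *
        zmodPowersHom (hpow ⁅x, y⁆) (.ofAdd v.toAdd.2.1)
      map_one' := by
        simp only [toAdd_one, Prod.fst_zero, Prod.snd_zero, ofAdd_zero, map_one, mul_one]
      map_mul' v w := by
        simp only [toAdd_mul, Prod.fst_add, Prod.snd_add, ofAdd_add, map_mul]
        exact (hcen _ _).mul_mul_mul_comm _ _ }
    (zmodPowersHom (hpow x)) fun k ↦ MonoidHom.ext fun v ↦ by
      set X := zmodPowersHom (hpow x)
      set Y := zmodPowersHom (hpow y)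
      set Z := zmodPowersHom (hpow ⁅x, y⁆)
      obtain ⟨a, b, c⟩ := v
      have hXY : X k * Y (.ofAdd a) * (X k)⁻¹ = Z (.ofAdd (k.toAdd * a)) * Y (.ofAdd a) :=
        mul_inv_eq_iff_eq_mul.1 (commutatorElement_zmodPowersHom hH hpow x y k.toAdd a)
      change Y (.ofAdd a) * Z (.ofAdd (b + k.toAdd * a)) =
        X k * (Y (.ofAdd a) * Z (.ofAdd b)) * (X k)⁻¹
      rw [mul_assoc, mul_assoc, ← (hcen _ _).eq, ← mul_assoc, ← mul_assoc, hXY, ← (hcen _ _).eq,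
        mul_assoc, ← map_mul, ← ofAdd_add, add_comm]

end MaximalClass

section SmallPGroup

variable {G H E : Type*} [Group G] [Group H] [Group E] {p : ℕ}

theorem le_center_of_card_eq_prime [Fact p.Prime] (hG : IsPGroup p G) (N : Subgroup G)
    [N.Normal] (hN : Nat.card N = p) : N ≤ center G := by
  have : Finite N := Nat.finite_of_card_ne_zero (hN ▸ (Fact.out : p.Prime).ne_zero)
  have hG' : IsPGroup p (ConjAct G) := hG
  obtain ⟨b, hb, hne⟩ := hG'.exists_fixed_point_of_prime_dvd_card_of_fixed_point N hN.symm.dvd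
    (a := 1) fun g ↦ smul_one g
  have hbc : (b : G) ∈ center G := mem_center_iff.2 fun g ↦
    mul_inv_eq_iff_eq_mul.1 (congrArg Subtype.val (hb (ConjAct.toConjAct g)))
  have hz : zpowers b = ⊤ := zpowers_eq_top_of_prime_card hN hne.symm
  intro x hx
  obtain ⟨k, hk⟩ : (⟨x, hx⟩ : N) ∈ zpowers b := hz ▸ mem_top _
  obtain rfl : (b : G) ^ k = x := congrArg Subtype.val hk
  exact zpow_mem hbc k

theorem ker_le_center_of_card_eq_pow_succ [Fact p.Prime] {k : ℕ} {ε : E →* H}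
    (hε : Function.Surjective ε) (hE : Nat.card E = p ^ (k + 1)) (hH : Nat.card H = p ^ k) :
    ε.ker ≤ center E := by
  have hp : p.Prime := Fact.out
  refine le_center_of_card_eq_prime (IsPGroup.of_card hE) _ ?_
  have h := ε.ker.card_mul_index
  rw [index_ker, MonoidHom.range_eq_top.2 hε, card_top, hE, hH, pow_succ'] at h
  exact Nat.eq_of_mul_eq_mul_right (pow_pos hp.pos k) h

theorem eq_top_of_not_commute [Fact p.Prime] (hG : Nat.card G = p ^ 3) {P : Subgroup G} {x y : G}
    (hx : x ∈ P) (hy : y ∈ P) (hxy : ¬Commute x y) : P = ⊤ := by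
  have hp : p.Prime := Fact.out
  obtain ⟨k, hk, hP⟩ := (Nat.dvd_prime_pow hp).1 (hG ▸ P.card_subgroup_dvd_card)
  have hcomm : ¬IsMulCommutative P := fun h ↦
    hxy (congrArg Subtype.val (h.is_comm.comm (⟨x, hx⟩ : P) ⟨y, hy⟩))
  rcases (by lia : k ≤ 1 ∨ k = 2 ∨ k = 3) with hk | rfl | rfl
  · have : IsCyclic P := isCyclic_of_card_dvd_prime (p := p)
      (hP ▸ (pow_dvd_pow p hk).trans (pow_one p).dvd)
    exact absurd IsCyclic.isMulCommutative hcomm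
  · exact absurd (IsPGroup.isMulCommutative_of_card_eq_prime_sq hP) hcomm
  · have : Finite P := Nat.finite_of_card_ne_zero (hP ▸ pow_ne_zero _ hp.ne_zero)
    exact P.eq_top_of_card_eq (hP.trans hG.symm)

theorem exists_not_commute (hG : commutator G ≠ ⊥) : ∃ x y : G, ¬Commute x y := by
  contrapose! hG
  exact (commutator_eq_bot_iff G).2 ⟨⟨hG⟩⟩

theorem commutator_ne_bot_of_card_eq_prime (hp : p.Prime) (hcard : Nat.card (commutator G) = p) :
    commutator G ≠ ⊥ := fun h ↦
  hp.one_lt.ne' (hcard.symm.trans (by rw [h, card_bot]))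

theorem pow_sq_eq_one (hcard : Nat.card (commutator G) = p)
    (hpow : ∀ x : G, x ^ p ∈ commutator G) (x : G) : x ^ p ^ 2 = 1 := by
  rw [sq, pow_mul]
  exact congrArg Subtype.val (hcard ▸ pow_card_eq_one' (x := (⟨x ^ p, hpow x⟩ : commutator G)))

theorem exponent_eq_sq (hp : p.Prime) (hcard : Nat.card (commutator G) = p)
    (hpow : ∀ x : G, x ^ p ∈ commutator G) (hne : ∃ x : G, x ^ p ≠ 1) :
    Monoid.exponent G = p ^ 2 := by
  refine Nat.eq_prime_pow_of_dvd_least_prime_pow hp (fun h ↦ ?_)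
    (Monoid.exponent_dvd_of_forall_pow_eq_one (pow_sq_eq_one hcard hpow))
  obtain ⟨x, hx⟩ := hne
  exact hx (Monoid.exponent_dvd_iff_forall_pow_eq_one.1 (pow_one p ▸ h) x)

end SmallPGroup

section OrderEight

variable {G H : Type*} [Group G] [Group H] {n : ℕ} {x y : H}

theorem not_commutator_le_center_quaternionGroup_four :
    ¬commutator (QuaternionGroup 4) ≤ center (QuaternionGroup 4) := fun h ↦
  absurd (mem_center_iff.1 (h (commutator_mem_commutator (mem_top (.a 1)) (mem_top (.xa 0))))
    (.xa 0)) (by decide)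

theorem quaternionLift_surjective (hH : Nat.card H = 2 ^ 3) (hx : x ^ (2 * n) = 1)
    (hy : y ^ 2 = x ^ n) (h : SemiconjBy y x x⁻¹) (hxy : ¬Commute x y) :
    Function.Surjective (quaternionLift hx hy h) := by
  refine MonoidHom.range_eq_top.1 (eq_top_of_not_commute hH
    ⟨.a 1, zmodPowersHom_ofAdd_one hx⟩ ⟨.xa 0, ?_⟩ hxy)
  exact (congrArg (y * ·) (map_one _)).trans (mul_one y)

theorem eq_of_ne_one_of_card_eq_two {N : Subgroup H} (hN : Nat.card N = 2) (hx : x ∈ N)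
    (hy : y ∈ N) (hx1 : x ≠ 1) (hy1 : y ≠ 1) : x = y :=
  congrArg Subtype.val <| ((Nat.card_eq_two_iff' (1 : N)).1 hN).unique
    (y₁ := ⟨x, hx⟩) (y₂ := ⟨y, hy⟩) (mt (congrArg Subtype.val) hx1) (mt (congrArg Subtype.val) hy1)

theorem semiconjBy_inv_of_sq_ne_one (hcard : Nat.card (commutator H) = 2)
    (hpow : ∀ w : H, w ^ 2 ∈ commutator H) (hx : x ^ 2 ≠ 1) (hxy : ¬Commute x y) :
    SemiconjBy y x x⁻¹ := by
  have h : ⁅x, y⁆ = x ^ 2 := eq_of_ne_one_of_card_eq_two hcard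
    (commutator_mem_commutator (mem_top x) (mem_top y)) (hpow x)
    (mt commutatorElement_eq_one_iff_commute.1 hxy) hx
  rw [commutatorElement_def, sq, mul_assoc, mul_assoc, mul_right_inj] at h
  rw [SemiconjBy, ← mul_inv_eq_iff_eq_mul, ← inv_inj]
  simpa [mul_assoc] using h

theorem sq_ne_one_of_not_commute {φ : G →* H} (hφ : Function.Surjective φ)
    (hG : commutator (FreeCentralExtension G) ≤ center (FreeCentralExtension G))
    (hH : Nat.card H = 2 ^ 3) (hcen : commutator H ≤ center H)
    (hcard : Nat.card (commutator H) = 2) (hpow : ∀ w : H, w ^ 2 ∈ commutator H)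
    (hxy : ¬Commute x y) : y ^ 2 ≠ 1 := by
  intro hy
  wlog hx : x ^ 2 ≠ 1 generalizing x
  · refine this (x := x * y) (fun h ↦ hxy ?_) ?_
    · simpa using h.mul_left (Commute.refl y).inv_left
    · rw [mul_pow_of_commutator_le_center hcen, not_not.1 hx, hy, one_mul, one_mul, Nat.choose_self,
        pow_one]
      exact mt (commutatorElement_eq_one_iff_commute.1 ·|>.symm) hxy
  have h := semiconjBy_inv_of_sq_ne_one hcard hpow hx hxy
  have hx4 := pow_sq_eq_one hcard hpow x
  have hx8 : x ^ (2 * 4) = 1 := by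
    rw [pow_mul']
    exact (congrArg (· ^ 2) hx4).trans (one_pow 2)
  have hε := quaternionLift_surjective (n := 4) hH hx8 (hy.trans hx4.symm) h hxy
  have hcard16 : Nat.card (QuaternionGroup 4) = 2 ^ 4 := by
    rw [Nat.card_eq_fintype_card, QuaternionGroup.card]
    rfl
  exact not_commutator_le_center_quaternionGroup_four
    (FreeCentralExtension.commutator_le_center_of_surjective hG hφ hε
      (ker_le_center_of_card_eq_pow_succ hε hcard16 hH))

theorem nonempty_mulEquiv_quaternionGroup_two {φ : G →* H} (hφ : Function.Surjective φ)
    (hG : commutator (FreeCentralExtension G) ≤ center (FreeCentralExtension G))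
    (hH : Nat.card H = 2 ^ 3) (hcen : commutator H ≤ center H)
    (hcard : Nat.card (commutator H) = 2) (hpow : ∀ w : H, w ^ 2 ∈ commutator H) :
    Nonempty (H ≃* QuaternionGroup 2) := by
  obtain ⟨x, y, hxy⟩ :=
    exists_not_commute (commutator_ne_bot_of_card_eq_prime Nat.prime_two hcard)
  have hy := sq_ne_one_of_not_commute hφ hG hH hcen hcard hpow hxy
  have hx := sq_ne_one_of_not_commute hφ hG hH hcen hcard hpow (mt Commute.symm hxy)
  have hε := quaternionLift_surjective (n := 2) hH (pow_sq_eq_one hcard hpow x)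
    (eq_of_ne_one_of_card_eq_two hcard (hpow y) (hpow x) hy hx)
    (semiconjBy_inv_of_sq_ne_one hcard hpow hx hxy) hxy
  refine ⟨(MulEquiv.ofBijective _ ((Nat.bijective_iff_surjective_and_card _).2 ⟨hε, ?_⟩)).symm⟩
  rw [hH, Nat.card_eq_fintype_card, QuaternionGroup.card]
  rfl

end OrderEight

section OrderPrimeCube

variable {G H : Type*} [Group G] [Group H] {p : ℕ}

theorem symSquareLift_surjective [Fact p.Prime] (hH : Nat.card H = p ^ 3)
    (hcen : commutator H ≤ center H) (hpow : ∀ w : H, w ^ p = 1) {x y : H} (hxy : ¬Commute x y) :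
    Function.Surjective (symSquareLift hcen hpow x y) := by
  refine MonoidHom.range_eq_top.1 (eq_top_of_not_commute hH ⟨.inr (.ofAdd 1), ?_⟩
    ⟨.inl (.ofAdd (1, 0, 0)), ?_⟩ hxy)
  · rw [symSquareLift, SemidirectProduct.lift_inr, zmodPowersHom_ofAdd_one]
  · rw [symSquareLift, SemidirectProduct.lift_inl]
    exact (congrArg₂ (· * ·) (zmodPowersHom_ofAdd_one _) (map_one _)).trans (mul_one y)

theorem card_symSquareGroup_zmod (p : ℕ) : Nat.card (SymSquareGroup (ZMod p)) = p ^ 4 := by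
  rw [SemidirectProduct.card, Nat.card_congr Multiplicative.toAdd,
    Nat.card_congr Multiplicative.toAdd, Nat.card_prod, Nat.card_prod, Nat.card_zmod]
  ring

theorem exists_pow_ne_one [Fact p.Prime] (hodd : Odd p) {φ : G →* H} (hφ : Function.Surjective φ)
    (hG : commutator (FreeCentralExtension G) ≤ center (FreeCentralExtension G))
    (hH : Nat.card H = p ^ 3) (hcen : commutator H ≤ center H)
    (hne : commutator H ≠ ⊥) : ∃ w : H, w ^ p ≠ 1 := by
  by_contra! hpow
  obtain ⟨x, y, hxy⟩ := exists_not_commute hne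
  have hε := symSquareLift_surjective hH hcen hpow hxy
  refine not_commutator_le_center_symSquareGroup (R := ZMod p) ?_
    (FreeCentralExtension.commutator_le_center_of_surjective hG hφ hε
      (ker_le_center_of_card_eq_pow_succ hε (card_symSquareGroup_zmod p) hH))
  have hp2 : ¬p ∣ 2 := fun h ↦
    hodd.ne_two_of_dvd_nat dvd_rfl ((Nat.prime_dvd_prime_iff_eq Fact.out Nat.prime_two).1 h)
  exact mt (ZMod.natCast_eq_zero_iff 2 p).1 hp2

end OrderPrimeCube

theorem surjective_fst_comp {G H A : Type*} [Group G] [Group H] [Group A] (e : G ≃* H × A) :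
    Function.Surjective ((MonoidHom.fst H A).comp e.toMonoidHom) :=
  Prod.fst_surjective.comp e.surjective

section GeneratingSets

variable {G H A : Type*} [Group G] [Group H] {p : ℕ}

theorem closure_setOf_pow_ne_one_eq_top {φ : G →* H} (hφ : Function.Surjective φ) {n : ℕ}
    (hH : ∀ w : H, w ^ n = 1 → ∃ x, x ^ n ≠ 1 ∧ (w * x) ^ n ≠ 1) :
    closure {w : G | w ^ n ≠ 1} = ⊤ := by
  have hlift {w : G} (hw : φ w ^ n ≠ 1) : w ∈ closure {w : G | w ^ n ≠ 1} :=
    subset_closure fun h ↦ hw (by rw [← map_pow, h, map_one])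
  refine eq_top_iff.2 fun w _ ↦ ?_
  by_cases hw : φ w ^ n = 1
  · obtain ⟨x, hx, hwx⟩ := hH _ hw
    obtain ⟨x, rfl⟩ := hφ x
    rw [← map_mul] at hwx
    exact (Subgroup.mul_mem_cancel_right _ (hlift hx)).1 (hlift hwx)
  · exact hlift hw

theorem exists_sq_ne_one_quaternionGroup_two (w : QuaternionGroup 2) (hw : w ^ 2 = 1) :
    ∃ x : QuaternionGroup 2, x ^ 2 ≠ 1 ∧ (w * x) ^ 2 ≠ 1 := by
  revert w; decide

theorem mul_pow_of_odd (hp : p.Prime) (hodd : Odd p) (hcen : commutator G ≤ center G)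
    (hcard : Nat.card (commutator G) = p) (x y : G) : (x * y) ^ p = x ^ p * y ^ p := by
  have h : ⁅y, x⁆ ^ p = 1 := congrArg Subtype.val (hcard ▸ pow_card_eq_one'
    (x := (⟨⁅y, x⁆, commutator_mem_commutator (mem_top y) (mem_top x)⟩ : commutator G)))
  have hp2 : 2 < p := hp.two_le.lt_of_ne' (hodd.ne_two_of_dvd_nat dvd_rfl)
  obtain ⟨k, hk⟩ := hp.dvd_choose_self two_ne_zero hp2
  rw [mul_pow_of_commutator_le_center hcen, hk, pow_mul, h, one_pow, mul_one]

theorem exists_commute_not_commute_of_mulEquiv_prod [CommGroup A] (e : G ≃* H × A)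
    (hH : ∀ w : H, ∃ x y, Commute w x ∧ Commute w y ∧ ¬Commute x y) (w : G) :
    ∃ x y, Commute w x ∧ Commute w y ∧ ¬Commute x y := by
  obtain ⟨x, y, hx, hy, hxy⟩ := hH (e w).1
  have hlift {u : H} (h : Commute (e w).1 u) : Commute w (e.symm (u, 1)) := by
    simpa using (Prod.commute_iff.2 ⟨h, Commute.one_right _⟩ : Commute (e w) (u, 1)).map e.symm
  refine ⟨_, _, hlift hx, hlift hy, fun h ↦ hxy ?_⟩
  simpa [Prod.commute_iff] using h.map e

theorem IsExtraspecial.card_commutator (hH : IsExtraspecial p H) : Nat.card (commutator H) = p :=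
  hH.1 ▸ hH.2.2

theorem IsExtraspecial.commutator_le_center (hH : IsExtraspecial p H) :
    commutator H ≤ center H :=
  hH.1.ge

theorem IsExtraspecial.index_center (hp : p.Prime) (hH : IsExtraspecial p H) {k : ℕ}
    (hcard : Nat.card H = p ^ (k + 1)) : (center H).index = p ^ k := by
  have h := (center H).card_mul_index
  rw [hH.2.2, hcard, pow_succ'] at h
  exact Nat.eq_of_mul_eq_mul_left hp.pos h

theorem exists_pow_ne_one_of_isE₂ (hp : p.Prime) (hodd : Odd p) (hH : IsE₂ p H) (w : H)
    (hw : w ^ p = 1) : ∃ x : H, x ^ p ≠ 1 ∧ (w * x) ^ p ≠ 1 := by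
  obtain ⟨hext, -, hexp⟩ := hH
  obtain ⟨x, hx⟩ : ∃ x : H, x ^ p ≠ 1 := by
    by_contra! h
    refine (Nat.pow_lt_pow_right hp.one_lt one_lt_two).not_ge ?_
    rw [← hexp, pow_one]
    exact Nat.le_of_dvd hp.pos (Monoid.exponent_dvd_of_forall_pow_eq_one h)
  refine ⟨x, hx, ?_⟩
  rwa [mul_pow_of_odd hp hodd hext.commutator_le_center hext.card_commutator, hw, one_mul]

theorem exists_commute_not_commute_of_isExtraspecial (hp : p.Prime) (hH : IsExtraspecial p H)
    {m : ℕ} (hm : 2 ≤ m) (hcard : Nat.card H = p ^ (2 * m + 1)) (w : H) :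
    ∃ x y, Commute w x ∧ Commute w y ∧ ¬Commute x y := by
  have : Fact p.Prime := ⟨hp⟩
  have : Finite H := Nat.finite_of_card_ne_zero (hcard ▸ pow_ne_zero _ hp.ne_zero)
  refine exists_commute_not_commute_of_lt_index_center hH.commutator_le_center
    hH.card_commutator ?_ w
  rw [hH.index_center hp hcard]
  exact Nat.pow_lt_pow_right hp.one_lt (by lia)

end GeneratingSets

section Sufficiency

variable {G H A : Type*} [Group G] [Group H] [CommGroup A] {p : ℕ}

theorem FreeCentralExtension.commutator_le_center_of_pow_ne_one (hp : p.Prime)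
    (hcard : Nat.card (commutator G) = p) (hpow : ∀ x : G, x ^ p ∈ commutator G)
    {φ : G →* H} (hφ : Function.Surjective φ)
    (hH : ∀ w : H, w ^ p = 1 → ∃ x, x ^ p ≠ 1 ∧ (w * x) ^ p ≠ 1) :
    commutator (FreeCentralExtension G) ≤ center (FreeCentralExtension G) := by
  have : Fact p.Prime := ⟨hp⟩
  refine commutator_le_center_of_closure_eq_top hcard hpow ?_ proj_surjective
    ker_proj_le_center
  exact eq_top_mono (Subgroup.closure_mono fun _ ↦ .inl) (closure_setOf_pow_ne_one_eq_top hφ hH)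

theorem FreeCentralExtension.commutator_le_center_of_isExtraspecial_prod (hp : p.Prime)
    (hcard : Nat.card (commutator G) = p) (hpow : ∀ x : G, x ^ p ∈ commutator G)
    (hH : IsExtraspecial p H) {m : ℕ} (hm : 2 ≤ m) (hHcard : Nat.card H = p ^ (2 * m + 1))
    (e : G ≃* H × A) :
    commutator (FreeCentralExtension G) ≤ center (FreeCentralExtension G) := by
  have : Fact p.Prime := ⟨hp⟩
  refine commutator_le_center_of_closure_eq_top hcard hpow ?_ proj_surjective
    ker_proj_le_center
  refine eq_top_iff.2 fun w _ ↦ Subgroup.subset_closure (.inr ?_)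
  exact exists_commute_not_commute_of_mulEquiv_prod e
    (exists_commute_not_commute_of_isExtraspecial hp hH hm hHcard) w

end Sufficiency

section Classification

variable {G H : Type*} [Group G] [Group H] {p : ℕ}

theorem card_commutator_of_card_abelianization [Nontrivial G] (hp : p.Prime) {n : ℕ}
    (hG : Nat.card G = p ^ n) (hab : Nat.card (Abelianization G) = p ^ (n - 1)) :
    Nat.card (commutator G) = p := by
  have : Finite G := Nat.finite_of_card_ne_zero (hG ▸ pow_ne_zero n hp.ne_zero)
  have hn : n ≠ 0 := by
    rintro rfl
    exact Finite.one_lt_card.ne' hG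
  refine Nat.eq_of_mul_eq_mul_left (pow_pos hp.pos (n - 1)) ?_
  rw [pow_sub_one_mul hn, ← hG, ← hab]
  exact (card_eq_card_quotient_mul_card_subgroup (commutator G)).symm

theorem card_schurMultiplier_eq_iff_of_abelianization {d : ℕ} (hp : p.Prime)
    (hcard : Nat.card (commutator G) = p) (hcen : commutator G ≤ center G)
    (hab : Nat.card (Abelianization G) = p ^ d) (hpow : ∀ x : Abelianization G, x ^ p = 1) :
    Nat.card (SchurMultiplier G) = p ^ (d.choose 2 - 1) ↔
      commutator (FreeCentralExtension G) ≤ center (FreeCentralExtension G) := by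
  obtain ⟨e⟩ := nonempty_mulEquiv_multiplicative_pi_zmod hp hab hpow
  have h := FreeCentralExtension.card_schurMultiplier_eq_iff hp hcard hcen
    (φ := e.toMonoidHom.comp Abelianization.of)
    (e.surjective.comp (QuotientGroup.mk'_surjective _)) ?_
  · rwa [Fintype.card_fin] at h
  · rw [MulEquiv.toMonoidHom_eq_coe, MonoidHom.ker_mulEquiv_comp]
    exact QuotientGroup.ker_mk' _

theorem quaternionGroup_or_isE₂_of_card_eq_pow_three (hp : p.Prime) {φ : G →* H}
    (hφ : Function.Surjective φ)
    (hG : commutator (FreeCentralExtension G) ≤ center (FreeCentralExtension G))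
    (hpow : ∀ x : G, x ^ p ∈ commutator G) (hH : IsExtraspecial p H) (hcard : Nat.card H = p ^ 3) :
    (p = 2 ∧ Nonempty (H ≃* QuaternionGroup 2)) ∨ (Odd p ∧ IsE₂ p H) := by
  have : Fact p.Prime := ⟨hp⟩
  have hpowH (w : H) : w ^ p ∈ commutator H := by
    obtain ⟨g, rfl⟩ := hφ w
    rw [← map_pow, ← map_commutator_of_surjective hφ]
    exact mem_map_of_mem φ (hpow g)
  rcases hp.eq_two_or_odd' with rfl | hodd
  · exact .inl ⟨rfl, nonempty_mulEquiv_quaternionGroup_two hφ hG hcard hH.commutator_le_center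
      hH.card_commutator hpowH⟩
  · refine .inr ⟨hodd, hH, hcard, exponent_eq_sq hp hH.card_commutator hpowH ?_⟩
    exact exists_pow_ne_one hodd hφ hG hcard hH.commutator_le_center
      (commutator_ne_bot_of_card_eq_prime hp hH.card_commutator)

end Classification

/-- **Theorem 6.** Let `G` be a non-abelian `p`-group of order `p^n` whose
abelianization is elementary abelian of order `p^(n-1)` and whose center has
exponent `p`. Then `s(G) = 2` iff `G` is isomorphic to `Q₈ × ℤ₂^(n-3)` (`p = 2`),
`E₂ × ℤ_p^(n-3)` (`p` odd), or `H × ℤ_p^(n-2m-1)` with `H` extraspecial of order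
`p^(2m+1)`, `m ≥ 2`. -/
theorem classification_center_exponent_p {p n : ℕ} (hp : p.Prime)
    {G : Type*} [Group G] (hG : Nat.card G = p ^ n)
    (hnab : ∃ a b : G, a * b ≠ b * a)
    (habCard : Nat.card (Abelianization G) = p ^ (n - 1))
    (habElem : ∀ x : Abelianization G, x ^ p = 1)
    (hZexp : ∀ z ∈ Subgroup.center G, z ^ p = 1) :
    Nat.card (SchurMultiplier G) = p ^ ((n - 1) * (n - 2) / 2 - 1) ↔
      (p = 2 ∧ Nonempty (G ≃* QuaternionGroup 2 ×
        (Fin (n - 3) → Multiplicative (ZMod 2)))) ∨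
      (Odd p ∧ ∃ (E : Type) (_ : Group E), IsE₂ p E ∧
        Nonempty (G ≃* E × (Fin (n - 3) → Multiplicative (ZMod p)))) ∨
      (∃ (H : Type) (_ : Group H) (m : ℕ), 2 ≤ m ∧ IsExtraspecial p H ∧
        Nat.card H = p ^ (2 * m + 1) ∧
        Nonempty (G ≃* H × (Fin (n - 2 * m - 1) → Multiplicative (ZMod p)))) := by
  have : Fact p.Prime := ⟨hp⟩
  have : Nontrivial G := let ⟨a, b, hab⟩ := hnab; ⟨a * b, b * a, hab⟩
  have hcard := card_commutator_of_card_abelianization hp hG habCard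
  have hcen := le_center_of_card_eq_prime (IsPGroup.of_card hG) _ hcard
  have hpow (x : G) : x ^ p ∈ commutator G :=
    (QuotientGroup.eq_one_iff _).1 (habElem (Abelianization.of x))
  rw [← Nat.sub_sub n 1 1, ← Nat.choose_two_right,
    card_schurMultiplier_eq_iff_of_abelianization hp hcard hcen habCard habElem]
  constructor
  · intro hK
    obtain ⟨H, _, m, hm, hH, hHcard, ⟨e⟩⟩ :=
      exists_mulEquiv_isExtraspecial_prod hp hG hcard hcen hpow hZexp
    obtain rfl | hm := hm.eq_or_lt
    · rcases quaternionGroup_or_isE₂_of_card_eq_pow_three hp (surjective_fst_comp e) hK hpow hH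
        hHcard with ⟨rfl, ⟨eH⟩⟩ | ⟨hodd, hE⟩
      · exact .inl ⟨rfl, ⟨e.trans (eH.prodCongr (.refl _))⟩⟩
      · exact .inr (.inl ⟨hodd, H, _, hE, ⟨e⟩⟩)
    · exact .inr (.inr ⟨H, _, m, hm, hH, hHcard, ⟨e⟩⟩)
  · rintro (⟨rfl, ⟨e⟩⟩ | ⟨hodd, E, _, hE, ⟨e⟩⟩ | ⟨H, _, m, hm, hH, hHcard, ⟨e⟩⟩)
    · exact FreeCentralExtension.commutator_le_center_of_pow_ne_one hp hcard hpow
        (surjective_fst_comp e) exists_sq_ne_one_quaternionGroup_two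
    · exact FreeCentralExtension.commutator_le_center_of_pow_ne_one hp hcard hpow
        (surjective_fst_comp e) (exists_pow_ne_one_of_isE₂ hp hodd hE)
    · exact FreeCentralExtension.commutator_le_center_of_isExtraspecial_prod hp hcard hpow hH hm
        hHcard e
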